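/- arXiv:2605.13808 — 10 statements merged into one kernel-verified Lean document; each statement's English description precedes it below -/
import Mathlib

section
/- Let m ≥ 1 and let r_1,…,r_m, c_1,…,c_m, t_1,…,t_m be real numbers with r_i ≠ 0 for every i. Set r := r_1+⋯+r_m, c := c_1+⋯+c_m, t := t_1+⋯+t_m. Then c² − 2·r·t = Σ_{i=1}^m (r/r_i)·(c_i² − 2·r_i·t_i) − Σ_{1 ≤ j < k ≤ m} r_j·r_k·(c_j/r_j − c_k/r_k)². -/
/-!
Write `cᵢ = rᵢ sᵢ`. The term of index `i` in the first sum is `r (rᵢ sᵢ² - 2 tᵢ)`, so the `tᵢ`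
contribute `-2 r t` to both sides and what remains is the weighted Lagrange identity
`(∑ rᵢ) (∑ rᵢ sᵢ²) - (∑ rᵢ sᵢ)² = ∑_{j<k} rⱼ rₖ (sⱼ - sₖ)²`.
-/

section LagrangeIdentity

variable {ι R : Type*} [Fintype ι] [LinearOrder ι] [LocallyFiniteOrderTop ι]
  [LocallyFiniteOrderBot ι]

theorem sum_mul_sum_mul_sq_sub_sq_sum_mul [CommRing R] (w x : ι → R) :
    (∑ i, w i) * (∑ i, w i * x i ^ 2) - (∑ i, w i * x i) ^ 2 =
      ∑ j, ∑ k ∈ Finset.Ioi j, w j * w k * (x j - x k) ^ 2 := by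
  -- The summand is left unsymmetrized: symmetrizing it would count every pair twice and require
  -- dividing by `2`.
  let f (k j : ι) : R := w j * (w k * x k ^ 2) - w j * x j * (w k * x k)
  have f_self (j : ι) : f j j = 0 := by ring
  have f_add_swap (j k : ι) : f k j + f j k = w j * w k * (x j - x k) ^ 2 := by ring
  calc (∑ i, w i) * (∑ i, w i * x i ^ 2) - (∑ i, w i * x i) ^ 2
      = ∑ j, ∑ k, f k j := by
        simp only [f, sq (∑ i, w i * x i), Finset.sum_mul_sum, Finset.sum_sub_distrib]
    _ = ∑ j, ∑ k ∈ {j}ᶜ, f k j := Fintype.sum_congr _ _ fun j ↦ by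
        rw [Fintype.sum_eq_add_sum_compl j, f_self, zero_add]
    _ = ∑ j, ∑ k ∈ Finset.Ioi j, w j * w k * (x j - x k) ^ 2 := by
        simp only [← Finset.sum_sum_Ioi_add_eq_sum_sum_off_diag, f_add_swap]

theorem sum_mul_sum_sq_div_sub_sq_sum {K : Type*} [Field K] {r : ι → K} (hr : ∀ i, r i ≠ 0)
    (c : ι → K) :
    (∑ i, r i) * (∑ i, c i ^ 2 / r i) - (∑ i, c i) ^ 2 =
      ∑ j, ∑ k ∈ Finset.Ioi j, r j * r k * (c j / r j - c k / r k) ^ 2 := by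
  have mul_slope (i : ι) : r i * (c i / r i) = c i := mul_div_cancel₀ _ (hr i)
  have mul_slope_sq (i : ι) : r i * (c i / r i) ^ 2 = c i ^ 2 / r i := by
    rw [sq, ← mul_assoc, mul_slope, sq, mul_div_assoc]
  simpa only [mul_slope, mul_slope_sq] using
    sum_mul_sum_mul_sq_sub_sq_sum_mul r fun i ↦ c i / r i

end LagrangeIdentity

theorem sum_div_mul_sq_sub_two_mul {ι K : Type*} [Field K] (s : Finset ι) {r : ι → K}
    (hr : ∀ i ∈ s, r i ≠ 0) (a : K) (c t : ι → K) :
    ∑ i ∈ s, a / r i * (c i ^ 2 - 2 * r i * t i) =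
      a * (∑ i ∈ s, c i ^ 2 / r i) - 2 * a * ∑ i ∈ s, t i := by
  rw [Finset.mul_sum, Finset.mul_sum, ← Finset.sum_sub_distrib]
  refine Finset.sum_congr rfl fun i hi ↦ ?_
  have r_ne_zero := hr i hi
  field_simp

theorem discriminant_sum_identity_general {ι K : Type*} [Fintype ι] [LinearOrder ι]
    [LocallyFiniteOrderTop ι] [LocallyFiniteOrderBot ι] [Field K] (r c t : ι → K)
    (hr : ∀ i, r i ≠ 0) :
    (∑ i, c i) ^ 2 - 2 * (∑ i, r i) * (∑ i, t i) =
      (∑ i, ((∑ j, r j) / r i) * (c i ^ 2 - 2 * r i * t i)) -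
        ∑ j, ∑ k ∈ Finset.Ioi j, r j * r k * (c j / r j - c k / r k) ^ 2 := by
  rw [sum_div_mul_sq_sub_two_mul _ fun i _ ↦ hr i, ← sum_mul_sum_sq_div_sub_sq_sum hr]
  ring

/-- **Key discriminant identity.** For real numbers `r i ≠ 0`, `c i`, `t i` (`i = 1, …, m`)
with totals `r = ∑ r i`, `c = ∑ c i`, `t = ∑ t i`, one has
`c² − 2·r·t = ∑ i (r/rᵢ)·(cᵢ² − 2·rᵢ·tᵢ) − ∑_{j<k} rⱼ·r_k·(cⱼ/rⱼ − c_k/r_k)²`. -/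
theorem discriminant_sum_identity (m : ℕ) (hm : 1 ≤ m) (r c t : Fin m → ℝ)
    (hr : ∀ i, r i ≠ 0) :
    (∑ i, c i) ^ 2 - 2 * (∑ i, r i) * (∑ i, t i) =
      (∑ i, ((∑ j, r j) / r i) * (c i ^ 2 - 2 * r i * t i)) -
        ∑ j, ∑ k ∈ Finset.univ.filter (fun k => j < k),
          r j * r k * (c j / r j - c k / r k) ^ 2 := by
  simpa only [Finset.filter_lt_eq_Ioi] using discriminant_sum_identity_general r c t hr
end

section
/- Let m ≥ 1 and let r_1,…,r_m, c_1,…,c_m, t_1,…,t_m be real numbers with r_i > 0 for every i. Set r := r_1+⋯+r_m, c := c_1+⋯+c_m, t := t_1+⋯+t_m and μ_i := c_i/r_i, and let μ_max := max_i μ_i and μ_min := min_i μ_i. Then c² − 2·r·t ≥ Σ_{i=1}^m (r/r_i)·(c_i² − 2·r_i·t_i) − (1/4)·r²·(μ_max − μ_min)². -/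
/-!
Since `(r / rᵢ) (cᵢ² - 2 rᵢ tᵢ) = r (rᵢ μᵢ²) - 2 r tᵢ`, the `t`-terms cancel and the claim becomes
`r ∑ rᵢ μᵢ² - (∑ rᵢ μᵢ)² ≤ r² (μ_max - μ_min)² / 4`. After division by `r²` this is Popoviciu's
bound on the variance of a random variable taking the value `μᵢ` with probability `rᵢ / r`. It
follows from the Bhatia–Davis bound `(μ_max - μ̄) (μ̄ - μ_min)`, where `μ̄` is the mean, by AM-GM.
-/

section WeightedVariance

variable {ι R : Type*} [CommRing R] {s : Finset ι} {w x : ι → R} {a b : R}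

theorem sum_mul_sub_mul_sub (s : Finset ι) (w x : ι → R) (a b : R) :
    ∑ i ∈ s, w i * ((b - x i) * (x i - a)) =
      (a + b) * ∑ i ∈ s, w i * x i - a * b * ∑ i ∈ s, w i - ∑ i ∈ s, w i * x i ^ 2 := by
  simp only [Finset.mul_sum, ← Finset.sum_sub_distrib]
  exact Finset.sum_congr rfl fun i _ ↦ by ring

theorem bhatia_davis_weighted_sum [PartialOrder R] [IsOrderedRing R]
    (hw : ∀ i ∈ s, 0 ≤ w i) (ha : ∀ i ∈ s, a ≤ x i) (hb : ∀ i ∈ s, x i ≤ b) :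
    (∑ i ∈ s, w i) * ∑ i ∈ s, w i * x i ^ 2 - (∑ i ∈ s, w i * x i) ^ 2 ≤
      (b * ∑ i ∈ s, w i - ∑ i ∈ s, w i * x i) * (∑ i ∈ s, w i * x i - a * ∑ i ∈ s, w i) := by
  have hgap : 0 ≤ ∑ i ∈ s, w i * ((b - x i) * (x i - a)) :=
    Finset.sum_nonneg fun i hi ↦ mul_nonneg (hw i hi) <|
      mul_nonneg (sub_nonneg.2 (hb i hi)) (sub_nonneg.2 (ha i hi))
  rw [sum_mul_sub_mul_sub] at hgap
  have := mul_nonneg (Finset.sum_nonneg hw) hgap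
  linear_combination this

theorem popoviciu_weighted_sum [LinearOrder R] [IsStrictOrderedRing R]
    (hw : ∀ i ∈ s, 0 ≤ w i) (ha : ∀ i ∈ s, a ≤ x i) (hb : ∀ i ∈ s, x i ≤ b) :
    4 * ((∑ i ∈ s, w i) * ∑ i ∈ s, w i * x i ^ 2 - (∑ i ∈ s, w i * x i) ^ 2) ≤
      (∑ i ∈ s, w i) ^ 2 * (b - a) ^ 2 := by
  set W := ∑ i ∈ s, w i
  set S := ∑ i ∈ s, w i * x i
  calc 4 * (W * ∑ i ∈ s, w i * x i ^ 2 - S ^ 2)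
      ≤ 4 * ((b * W - S) * (S - a * W)) := by
        gcongr
        exact bhatia_davis_weighted_sum hw ha hb
    _ = 4 * (b * W - S) * (S - a * W) := (mul_assoc ..).symm
    _ ≤ ((b * W - S) + (S - a * W)) ^ 2 := four_mul_le_sq_add ..
    _ = W ^ 2 * (b - a) ^ 2 := by ring

end WeightedVariance

section Discriminant

variable {ι K : Type*} [Field K] {s : Finset ι} {r : ι → K}

theorem sum_div_mul_discriminant (hr : ∀ i ∈ s, r i ≠ 0) (k : K) (c t : ι → K) :
    ∑ i ∈ s, k / r i * (c i ^ 2 - 2 * r i * t i) =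
      k * ∑ i ∈ s, r i * (c i / r i) ^ 2 - 2 * k * ∑ i ∈ s, t i := by
  simp only [Finset.mul_sum, ← Finset.sum_sub_distrib]
  refine Finset.sum_congr rfl fun i hi ↦ ?_
  have := hr i hi
  field_simp

theorem discriminant_sum_inequality_general [LinearOrder K] [IsStrictOrderedRing K]
    {c t : ι → K} {a b : K} (hr : ∀ i ∈ s, 0 < r i)
    (ha : ∀ i ∈ s, a ≤ c i / r i) (hb : ∀ i ∈ s, c i / r i ≤ b) :
    ∑ i ∈ s, (∑ j ∈ s, r j) / r i * (c i ^ 2 - 2 * r i * t i) -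
        1 / 4 * (∑ i ∈ s, r i) ^ 2 * (b - a) ^ 2 ≤
      (∑ i ∈ s, c i) ^ 2 - 2 * (∑ i ∈ s, r i) * ∑ i ∈ s, t i := by
  have hr₀ : ∀ i ∈ s, r i ≠ 0 := fun i hi ↦ (hr i hi).ne'
  have hc : ∑ i ∈ s, r i * (c i / r i) = ∑ i ∈ s, c i :=
    Finset.sum_congr rfl fun i hi ↦ mul_div_cancel₀ (c i) (hr₀ i hi)
  have hvar := popoviciu_weighted_sum (fun i hi ↦ (hr i hi).le) ha hb
  rw [hc] at hvar
  rw [sum_div_mul_discriminant hr₀]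
  linear_combination hvar / 4

end Discriminant

/-- **Key discriminant inequality.** For positive real numbers `r i` and real numbers
`c i`, `t i` (`i = 1, …, m`) with totals `r = ∑ r i`, `c = ∑ c i`, `t = ∑ t i` and slopes
`μ i = c i / r i`, one has
`c² − 2·r·t ≥ ∑ i (r/rᵢ)·(cᵢ² − 2·rᵢ·tᵢ) − (1/4)·r²·(μ_max − μ_min)²`. -/
theorem discriminant_sum_inequality (m : ℕ) (hm : 1 ≤ m) (r c t : Fin m → ℝ)
    (hr : ∀ i, 0 < r i) :
    (∑ i, c i) ^ 2 - 2 * (∑ i, r i) * (∑ i, t i) ≥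
      (∑ i, ((∑ j, r j) / r i) * (c i ^ 2 - 2 * r i * t i)) -
        (1 / 4) * (∑ i, r i) ^ 2 *
          ((Finset.univ.sup'
              (Finset.univ_nonempty_iff.mpr ⟨⟨0, Nat.lt_of_lt_of_le Nat.zero_lt_one hm⟩⟩)
              (fun i => c i / r i)) -
            (Finset.univ.inf'
              (Finset.univ_nonempty_iff.mpr ⟨⟨0, Nat.lt_of_lt_of_le Nat.zero_lt_one hm⟩⟩)
              (fun i => c i / r i))) ^ 2 :=
  discriminant_sum_inequality_general (fun i _ ↦ hr i)
    (fun _ ↦ Finset.inf'_le _) (fun _ ↦ Finset.le_sup' (fun i ↦ c i / r i))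
end

section
/- Let a > 0 and b, ξ, α, β be real numbers with α > a²/6 + |β|·a/2. On ℝ⁴ with coordinates x₀, x₁, x₂, x₃ define the quadratic forms Δ̄(x) := x₁² − 2·x₂·x₀ and ∇(x) := 3·ξ·a²·x₀² + 2·x₂·(2·x₂ − 3·ξ·x₀) − 6·x₁·(x₃ + b·ξ·x₀), and let Z : ℝ⁴ → ℂ be the ℝ-linear map Z(x) := −x₃ − b·ξ·x₀ + β·x₂ + α·x₁ + i·(x₂ − (a²/2)·x₀). Then there exists a nonempty open interval I ⊆ (a², 6α) such that for every K ∈ I, the quadratic form K·Δ̄ + ∇ is negative definite on the kernel of Z, i.e. (K·Δ̄ + ∇)(x) < 0 for every nonzero x ∈ ℝ⁴ with Z(x) = 0. -/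
/-- The discriminant quadratic form `Δ̄(x) = x₁² − 2·x₂·x₀` on `ℝ⁴`. -/
noncomputable def deltaBarQ (x : Fin 4 → ℝ) : ℝ := x 1 ^ 2 - 2 * x 2 * x 0

/-- The Bogomolov–Gieseker-type quadratic form
`∇(x) = 3·ξ·a²·x₀² + 2·x₂·(2·x₂ − 3·ξ·x₀) − 6·x₁·(x₃ + b·ξ·x₀)` on `ℝ⁴`. -/
noncomputable def nablaQ (a b ξ : ℝ) (x : Fin 4 → ℝ) : ℝ :=
  3 * ξ * a ^ 2 * x 0 ^ 2 + 2 * x 2 * (2 * x 2 - 3 * ξ * x 0) -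
    6 * x 1 * (x 3 + b * ξ * x 0)

/-- The (ℝ-linear) central charge
`Z(x) = −x₃ − b·ξ·x₀ + β·x₂ + α·x₁ + i·(x₂ − (a²/2)·x₀) : ℝ⁴ → ℂ`. -/
noncomputable def centralChargeZ (a b ξ α β : ℝ) (x : Fin 4 → ℝ) : ℂ :=
  Complex.ofReal (-x 3 - b * ξ * x 0 + β * x 2 + α * x 1) +
    Complex.I * Complex.ofReal (x 2 - a ^ 2 / 2 * x 0)

/-!
On `ker Z`, parametrised by `u = x₁` and `v = a·x₀`, the form `K·Δ̄ + ∇` becomes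
`-((6α - K)u² + 3βa·uv + (K - a²)v²)`: the correction terms in `b` and `ξ` cancel.  Both diagonal
coefficients exceed `|3βa|/2` for `K` in a symmetric interval about the midpoint of `(a², 6α)`, and
this interval is nonempty exactly when `6α - a² > 3|β|a`, which is the assumption on `α`.
-/

section BinaryQuadraticForm

variable {R : Type*} [CommRing R] [LinearOrder R] [IsStrictOrderedRing R] {p q r : R}

lemma discrim_lt_zero_of_abs_lt (hp : |q| < 2 * p) (hr : |q| < 2 * r) : discrim p q r < 0 := by
  have hmul : |q| * |q| < 2 * p * (2 * r) := mul_lt_mul'' hp hr (abs_nonneg q) (abs_nonneg q)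
  rw [abs_mul_abs_self] at hmul
  rw [discrim]
  linarith

lemma binary_quadratic_pos_of_discrim_lt_zero (hp : 0 < p) (hdiscrim : discrim p q r < 0) {u v : R}
    (huv : u ≠ 0 ∨ v ≠ 0) : 0 < p * u ^ 2 + q * u * v + r * v ^ 2 := by
  have complete_square : 4 * p * (p * u ^ 2 + q * u * v + r * v ^ 2) =
      (2 * p * u + q * v) ^ 2 + -discrim p q r * v ^ 2 := by
    rw [discrim]; ring
  rw [← mul_pos_iff_of_pos_left (show 0 < 4 * p by positivity), complete_square]
  rcases eq_or_ne v 0 with rfl | hv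
  · have hu : u ≠ 0 := huv.resolve_right (not_not_intro rfl)
    have hsq : 0 < (2 * p * u) ^ 2 := by positivity
    simpa only [mul_zero, add_zero, ne_eq, OfNat.ofNat_ne_zero, not_false_eq_true, zero_pow]
      using hsq
  · have : 0 < -discrim p q r := neg_pos.mpr hdiscrim
    positivity

end BinaryQuadraticForm

section Kernel

variable {a b ξ α β : ℝ} {x : Fin 4 → ℝ}

lemma centralChargeZ_eq_zero_iff :
    centralChargeZ a b ξ α β x = 0 ↔
      x 2 = a ^ 2 / 2 * x 0 ∧ x 3 = α * x 1 + (β * (a ^ 2 / 2) - b * ξ) * x 0 := by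
  have hre : (centralChargeZ a b ξ α β x).re = -x 3 - b * ξ * x 0 + β * x 2 + α * x 1 := by
    rw [centralChargeZ, Complex.add_re, Complex.ofReal_re, Complex.re_mul_ofReal, Complex.I_re,
      zero_mul, add_zero]
  have him : (centralChargeZ a b ξ α β x).im = x 2 - a ^ 2 / 2 * x 0 := by
    rw [centralChargeZ, Complex.add_im, Complex.ofReal_im, Complex.im_mul_ofReal, Complex.I_im,
      one_mul, zero_add]
  rw [Complex.ext_iff, hre, him, Complex.zero_re, Complex.zero_im]
  constructor
  · rintro ⟨hre_zero, him_zero⟩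
    have h2 : x 2 = a ^ 2 / 2 * x 0 := sub_eq_zero.mp him_zero
    rw [h2] at hre_zero
    exact ⟨h2, by linarith⟩
  · rintro ⟨h2, h3⟩
    rw [h2, h3]
    constructor <;> ring

lemma apply_one_or_apply_zero_ne_zero_of_centralChargeZ_eq_zero (hx : x ≠ 0)
    (hZ : centralChargeZ a b ξ α β x = 0) : x 1 ≠ 0 ∨ x 0 ≠ 0 := by
  obtain ⟨h2, h3⟩ := centralChargeZ_eq_zero_iff.mp hZ
  contrapose! hx
  obtain ⟨h1, h0⟩ := hx
  ext i
  fin_cases i <;> simp [h0, h1, h2, h3]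

lemma mul_deltaBarQ_add_nablaQ_of_centralChargeZ_eq_zero (K : ℝ)
    (hZ : centralChargeZ a b ξ α β x = 0) :
    K * deltaBarQ x + nablaQ a b ξ x =
      -((6 * α - K) * x 1 ^ 2 + 3 * β * a * x 1 * (a * x 0) +
        (K - a ^ 2) * (a * x 0) ^ 2) := by
  obtain ⟨h2, h3⟩ := centralChargeZ_eq_zero_iff.mp hZ
  rw [deltaBarQ, nablaQ, h2, h3]
  ring

lemma mul_deltaBarQ_add_nablaQ_neg_of_discrim_lt_zero {K : ℝ} (ha : a ≠ 0) (hK : K < 6 * α)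
    (hdiscrim : discrim (6 * α - K) (3 * β * a) (K - a ^ 2) < 0) (hx : x ≠ 0)
    (hZ : centralChargeZ a b ξ α β x = 0) : K * deltaBarQ x + nablaQ a b ξ x < 0 := by
  rw [mul_deltaBarQ_add_nablaQ_of_centralChargeZ_eq_zero K hZ, neg_lt_zero]
  exact binary_quadratic_pos_of_discrim_lt_zero (sub_pos.mpr hK) hdiscrim
    ((apply_one_or_apply_zero_ne_zero_of_centralChargeZ_eq_zero hx hZ).imp_right
      (mul_ne_zero ha))

end Kernel

/-- **Support property lemma.** If `a > 0` and `α > a²/6 + |β|·a/2`, then there is a nonempty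
open interval `I ⊆ (a², 6α)` such that for every `K ∈ I` the quadratic form `K·Δ̄ + ∇` is
negative definite on the kernel of `Z`. -/
theorem exists_interval_negdef_on_ker_centralCharge (a b ξ α β : ℝ) (ha : 0 < a)
    (hα : α > a ^ 2 / 6 + |β| * a / 2) :
    ∃ K₁ K₂ : ℝ, K₁ < K₂ ∧ a ^ 2 ≤ K₁ ∧ K₂ ≤ 6 * α ∧
      ∀ K ∈ Set.Ioo K₁ K₂, ∀ x : Fin 4 → ℝ, x ≠ 0 →
        centralChargeZ a b ξ α β x = 0 →
        K * deltaBarQ x + nablaQ a b ξ x < 0 := by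
  have habs : |3 * β * a| = 3 * (|β| * a) := by
    rw [abs_mul, abs_mul, abs_of_pos ha, abs_of_pos (three_pos : (0 : ℝ) < 3), mul_assoc]
  have hnonneg : 0 ≤ |3 * β * a| := abs_nonneg _
  refine ⟨a ^ 2 + |3 * β * a| / 2, 6 * α - |3 * β * a| / 2,
    by linarith, by linarith, by linarith, ?_⟩
  rintro K ⟨hK₁, hK₂⟩ x hx hZ
  have hdiscrim : discrim (6 * α - K) (3 * β * a) (K - a ^ 2) < 0 :=
    discrim_lt_zero_of_abs_lt (by linarith) (by linarith)
  exact mul_deltaBarQ_add_nablaQ_neg_of_discrim_lt_zero ha.ne' (by linarith) hdiscrim hx hZ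
end

section
/- Let 𝒜 be an abelian category and let 𝒞 be a class of objects of 𝒜 containing the zero objects and closed under subobjects, quotient objects, and extensions. If ι₁ : E → T₁ and ι₂ : E → T₂ are two 𝒞-hulls of the same object E, then there exists a unique isomorphism φ : T₁ → T₂ with φ ∘ ι₁ = ι₂. -/
open CategoryTheory CategoryTheory.Limits

/-- A class of objects of an abelian category containing the zero objects and closed under
subobjects, quotient objects, and extensions (a Serre class). -/
def IsSerreClass {𝒜 : Type*} [Category 𝒜] [Abelian 𝒜] (P : 𝒜 → Prop) : Prop :=
  (∀ X : 𝒜, IsZero X → P X) ∧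
    (∀ ⦃X Y : 𝒜⦄ (f : X ⟶ Y), Mono f → P Y → P X) ∧
    (∀ ⦃X Y : 𝒜⦄ (f : X ⟶ Y), Epi f → P X → P Y) ∧
    (∀ S : ShortComplex 𝒜, S.ShortExact → P S.X₁ → P S.X₃ → P S.X₂)

/-- An object `X` is `𝒞`-torsion-free if every morphism `c ⟶ X` with `c ∈ 𝒞` is zero. -/
def IsTorsionFreeFor {𝒜 : Type*} [Category 𝒜] [Abelian 𝒜] (P : 𝒜 → Prop) (X : 𝒜) : Prop :=
  ∀ ⦃c : 𝒜⦄, P c → ∀ f : c ⟶ X, f = 0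

/-- An object `T` is `𝒞`-saturated if it is `𝒞`-torsion-free and every short exact sequence
`0 → T → Y → c → 0` with `c ∈ 𝒞` splits (equivalently, every monomorphism `T ⟶ Y` with
cokernel in `𝒞` admits a retraction). -/
def IsSaturatedFor {𝒜 : Type*} [Category 𝒜] [Abelian 𝒜] (P : 𝒜 → Prop) (T : 𝒜) : Prop :=
  IsTorsionFreeFor P T ∧
    ∀ ⦃Y : 𝒜⦄ (f : T ⟶ Y), Mono f → P (cokernel f) → ∃ r : Y ⟶ T, f ≫ r = 𝟙 T

/-- A `𝒞`-hull of `E` is a monomorphism `ι : E ⟶ T` such that `coker ι ∈ 𝒞` and `T` is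
`𝒞`-saturated. -/
def IsHullFor {𝒜 : Type*} [Category 𝒜] [Abelian 𝒜] (P : 𝒜 → Prop)
    {E T : 𝒜} (ι : E ⟶ T) : Prop :=
  Mono ι ∧ P (cokernel ι) ∧ IsSaturatedFor P T

/-!
A saturated object `X` is local with respect to the monomorphisms `ι : E ⟶ T` with cokernel in
`𝒞`: every `f : E ⟶ X` extends uniquely along `ι`. For existence, the pushout of `ι` along `f` is a
monomorphism out of `X` with the same cokernel as `ι`, so it has a retraction, which supplies the
extension. For uniqueness, the difference of two extensions factors through `coker ι`. A hull of
`E` is therefore characterised by a universal property.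
-/

section

variable {𝒜 : Type*} [Category 𝒜] [Abelian 𝒜]

theorem IsSerreClass.isClosedUnderIsomorphisms {P : ObjectProperty 𝒜} (hP : IsSerreClass P) :
    P.IsClosedUnderIsomorphisms where
  of_iso e := hP.2.1 e.inv inferInstance

theorem IsTorsionFreeFor.hom_ext {P : 𝒜 → Prop} {E T X : 𝒜} (hX : IsTorsionFreeFor P X)
    {ι : E ⟶ T} (hι : P (cokernel ι)) {f g : T ⟶ X} (h : ι ≫ f = ι ≫ g) : f = g := by
  have ι_comp_sub : ι ≫ (f - g) = 0 := by rw [Preadditive.comp_sub, h, sub_self]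
  rw [← sub_eq_zero, ← cokernel.π_desc ι (f - g) ι_comp_sub, hX hι (cokernel.desc ι _ _),
    comp_zero]

variable {P : ObjectProperty 𝒜} [P.IsClosedUnderIsomorphisms]

theorem IsSaturatedFor.exists_comp_eq {E T X : 𝒜} (hX : IsSaturatedFor P X) {ι : E ⟶ T} [Mono ι]
    (hι : P (cokernel ι)) (f : E ⟶ X) : ∃ g : T ⟶ X, ι ≫ g = f := by
  have : IsIso (cokernel.map ι (pushout.inr ι f) f (pushout.inl ι f) pushout.condition) :=
    isIso_cokernel_map_of_isPushout (IsPushout.of_hasPushout ι f)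
  have cokernel_mem : P (cokernel (pushout.inr ι f)) :=
    P.prop_of_isIso (cokernel.map ι _ f _ pushout.condition) hι
  obtain ⟨r, hr⟩ := hX.2 (pushout.inr ι f) inferInstance cokernel_mem
  exact ⟨pushout.inl ι f ≫ r, by rw [pushout.condition_assoc, hr, Category.comp_id]⟩

theorem IsSaturatedFor.existsUnique_comp_eq {E T X : 𝒜} (hX : IsSaturatedFor P X) {ι : E ⟶ T}
    [Mono ι] (hι : P (cokernel ι)) (f : E ⟶ X) : ∃! g : T ⟶ X, ι ≫ g = f :=
  existsUnique_of_exists_of_unique (hX.exists_comp_eq hι f)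
    fun _ _ hg hg' ↦ hX.1.hom_ext hι (hg.trans hg'.symm)

theorem hull_unique_up_to_unique_iso_general {E T₁ T₂ : 𝒜} {ι₁ : E ⟶ T₁} {ι₂ : E ⟶ T₂}
    (h₁ : IsHullFor P ι₁) (h₂ : IsHullFor P ι₂) :
    ∃! φ : T₁ ≅ T₂, ι₁ ≫ φ.hom = ι₂ := by
  obtain ⟨_, coker₁, sat₁⟩ := h₁
  obtain ⟨_, coker₂, sat₂⟩ := h₂
  obtain ⟨a, ha, a_unique⟩ := sat₂.existsUnique_comp_eq coker₁ ι₂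
  obtain ⟨b, hb⟩ := sat₁.exists_comp_eq coker₂ ι₁
  have hab : a ≫ b = 𝟙 T₁ := sat₁.1.hom_ext coker₁ (by rw [reassoc_of% ha, hb, Category.comp_id])
  have hba : b ≫ a = 𝟙 T₂ := sat₂.1.hom_ext coker₂ (by rw [reassoc_of% hb, ha, Category.comp_id])
  exact ⟨⟨a, b, hab, hba⟩, ha, fun ψ hψ ↦ Iso.ext (a_unique ψ.hom hψ)⟩

end

/-- **Uniqueness of hulls.** Two `𝒞`-hulls of the same object are related by a unique
isomorphism compatible with the hull maps. -/
theorem hull_unique_up_to_unique_iso {𝒜 : Type*} [Category 𝒜] [Abelian 𝒜]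
    {P : 𝒜 → Prop} (hP : IsSerreClass P) {E T₁ T₂ : 𝒜}
    {ι₁ : E ⟶ T₁} {ι₂ : E ⟶ T₂} (h₁ : IsHullFor P ι₁) (h₂ : IsHullFor P ι₂) :
    ∃! φ : T₁ ≅ T₂, ι₁ ≫ φ.hom = ι₂ := by
  have := hP.isClosedUnderIsomorphisms
  exact hull_unique_up_to_unique_iso_general h₁ h₂
end

section
/- Let 𝒜 be an abelian category and let 𝒞 be a class of objects of 𝒜 containing the zero objects and closed under subobjects, quotient objects, and extensions. Let u : F → E be a monomorphism in 𝒜, and let ι_F : F → T_F and ι_E : E → T_E be 𝒞-hulls of F and E respectively. Then there exists a unique morphism v : T_F → T_E with v ∘ ι_F = ι_E ∘ u; this morphism v is a monomorphism, and if moreover coker(u) ∈ 𝒞 then v is an isomorphism. -/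
open CategoryTheory CategoryTheory.Limits

/-!
A saturated object `T` is local with respect to every monomorphism `i : F ⟶ G` with cokernel in
`P`: torsion-freeness makes the extension of a morphism `F ⟶ T` along `i` unique, and one exists
because the pushout of `i` is a split monomorphism out of `T`. Hence `ιF` and `ιE` are local
equivalences, which gives `v`; if `u` is a local equivalence as well, then so is `v` by
two-out-of-three, and a local equivalence between saturated objects is an isomorphism. When `u` is
a monomorphism, the kernel of `v` meets `F` trivially, so it embeds in `cokernel ιF` and vanishes
because `TF` is torsion-free.
-/

section

variable {𝒜 : Type*} [Category 𝒜] [Abelian 𝒜] {P : ObjectProperty 𝒜} {F G T : 𝒜}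

lemma IsSerreClass.isClosedUnderSubobjects (hP : IsSerreClass P) : P.IsClosedUnderSubobjects where
  prop_of_mono f hf := hP.2.1 f hf

lemma IsTorsionFreeFor.precomp_injective (hT : IsTorsionFreeFor P T) {i : F ⟶ G}
    (hi : P (cokernel i)) : Function.Injective fun v : G ⟶ T ↦ i ≫ v := by
  intro v w (hvw : i ≫ v = i ≫ w)
  have hsub : i ≫ (v - w) = 0 := by rw [Preadditive.comp_sub, hvw, sub_self]
  rw [← sub_eq_zero, ← cokernel.π_desc i (v - w) hsub, hT hi (cokernel.desc i _ hsub), comp_zero]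

lemma mono_kernelCokernelCompSequence_δ (i : F ⟶ G) (v : G ⟶ T) [Mono (i ≫ v)] :
    Mono (kernelCokernelCompSequence.δ i v) :=
  ((kernelCokernelCompSequence_exact i v).exact 1).mono_g
    ((isZero_kernel_of_mono (i ≫ v)).eq_of_src _ _)

lemma IsTorsionFreeFor.mono_of_mono_comp [P.IsClosedUnderSubobjects] (hG : IsTorsionFreeFor P G)
    {i : F ⟶ G} (hi : P (cokernel i)) (v : G ⟶ T) [Mono (i ≫ v)] : Mono v :=
  have := mono_kernelCokernelCompSequence_δ i v
  have hker : P (kernel v) := P.prop_of_mono (kernelCokernelCompSequence.δ i v) hi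
  Preadditive.mono_of_kernel_zero (hG hker (kernel.ι v))

lemma IsSaturatedFor.precomp_surjective [P.IsClosedUnderIsomorphisms] (hT : IsSaturatedFor P T)
    {i : F ⟶ G} [Mono i] (hi : P (cokernel i)) :
    Function.Surjective fun v : G ⟶ T ↦ i ≫ v := by
  intro g
  have sq := IsPushout.of_hasPushout i g
  have := isIso_cokernel_map_of_isPushout sq
  have hcoker : P (cokernel (pushout.inr i g)) :=
    P.prop_of_iso (asIso (cokernel.map _ _ _ _ sq.w)) hi
  obtain ⟨r, hr⟩ := hT.2 (pushout.inr i g) inferInstance hcoker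
  exact ⟨pushout.inl i g ≫ r, by simp only [pushout.condition_assoc, hr, Category.comp_id]⟩

lemma isLocal_isSaturatedFor_of_mono [P.IsClosedUnderIsomorphisms] (i : F ⟶ G) [Mono i]
    (hi : P (cokernel i)) : ObjectProperty.isLocal (IsSaturatedFor P) i :=
  fun _ hT ↦ ⟨hT.1.precomp_injective hi, hT.precomp_surjective hi⟩

lemma IsHullFor.isLocal [P.IsClosedUnderIsomorphisms] {ι : F ⟶ T} (hι : IsHullFor P ι) :
    ObjectProperty.isLocal (IsSaturatedFor P) ι :=
  have := hι.1
  isLocal_isSaturatedFor_of_mono ι hι.2.1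

theorem hull_map_of_mono_general [P.IsClosedUnderSubobjects] {E TF TE : 𝒜}
    (u : F ⟶ E) {ιF : F ⟶ TF} {ιE : E ⟶ TE} (hF : IsHullFor P ιF) (hE : IsHullFor P ιE) :
    (∃! v : TF ⟶ TE, ιF ≫ v = u ≫ ιE) ∧
      ∀ v : TF ⟶ TE, ιF ≫ v = u ≫ ιE → Mono u →
        Mono v ∧ (P (cokernel u) → IsIso v) := by
  have ⟨_, hcokerF, hTF⟩ := hF
  have ⟨_, _, hTE⟩ := hE
  refine ⟨(hF.isLocal TE hTE).existsUnique (u ≫ ιE), fun v hv _ ↦ ⟨?_, fun hu ↦ ?_⟩⟩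
  · have : Mono (ιF ≫ v) := hv ▸ mono_comp u ιE
    exact hTF.1.mono_of_mono_comp hcokerF v
  · let W := ObjectProperty.isLocal (IsSaturatedFor P)
    have hcomp : W (ιF ≫ v) :=
      hv ▸ W.comp_mem u ιE (isLocal_isSaturatedFor_of_mono u hu) hE.isLocal
    have hlocal : W v := W.of_precomp ιF v hF.isLocal hcomp
    exact (ObjectProperty.isLocal_iff_isIso _ v hTF hTE).1 hlocal

end

/-- **Functoriality of hulls along monomorphisms.** A monomorphism `u : F ⟶ E` extends
uniquely to a morphism of `𝒞`-hulls `v : T_F ⟶ T_E`; this `v` is a monomorphism, and it is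
an isomorphism if moreover `coker u ∈ 𝒞`. -/
theorem hull_map_of_mono {𝒜 : Type*} [Category 𝒜] [Abelian 𝒜]
    {P : 𝒜 → Prop} (hP : IsSerreClass P) {F E TF TE : 𝒜}
    (u : F ⟶ E) (hu : Mono u) {ιF : F ⟶ TF} {ιE : E ⟶ TE}
    (hF : IsHullFor P ιF) (hE : IsHullFor P ιE) :
    (∃! v : TF ⟶ TE, ιF ≫ v = u ≫ ιE) ∧
      ∀ v : TF ⟶ TE, ιF ≫ v = u ≫ ιE →
        Mono v ∧ (P (cokernel u) → IsIso v) := by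
  have := hP.isClosedUnderSubobjects
  exact (hull_map_of_mono_general u hF hE).imp_right fun h v hv ↦ h v hv hu
end

section
/- Let 𝒜 be an abelian category and let 𝒞 be a class of objects of 𝒜 containing the zero objects and closed under subobjects, quotient objects, and extensions. Let (G_n)_{n≥1} be objects of 𝒜 together with monomorphisms g_n : G_n → G_{n+1} such that every G_n is 𝒞-torsion-free and coker(g_n) ∈ 𝒞 for all n ≥ 1. Assume there is a monomorphism ι : G_1 → T such that coker(ι) ∈ 𝒞, every short exact sequence 0 → T → Y → c → 0 with c ∈ 𝒞 splits, and coker(ι) is a Noetherian object of 𝒜 (every ascending chain of subobjects of coker(ι) stabilizes). Then the sequence stabilizes: there exists N such that g_n is an isomorphism for all n ≥ N. -/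
open CategoryTheory CategoryTheory.Limits

/-!
If `ψ : G (n + 1) ⟶ T` is mono on `G n`, then `ker ψ` embeds into `coker (g n) ∈ 𝒞`, so
`ker ψ = 0` because `G (n + 1)` is `𝒞`-torsion-free. Hence every extension of a monomorphism along
`g n` is again a monomorphism. Such extensions into `T` exist by pushing out along `g n` and
splitting, so `ι` extends successively to compatible embeddings of all the `G n` into `T`. Their
images form an ascending chain of subobjects of `T` containing `im ι`, which corresponds to an
ascending chain of subobjects of the Noetherian object `coker ι`.
-/

section

variable {𝒜 : Type*} [Category 𝒜] [Abelian 𝒜]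

theorem factors_iff_comp_cokernel_π_eq_zero {X T : 𝒜} (S : Subobject T) (h : X ⟶ T) :
    S.Factors h ↔ h ≫ cokernel.π S.arrow = 0 := by
  refine ⟨fun hS => ?_, fun h0 => ?_⟩
  · rw [← S.factorThru_arrow h hS, Category.assoc, cokernel.condition, comp_zero]
  · exact (Subobject.factors_iff S h).2
      ⟨Abelian.monoLift S.arrow h h0, Abelian.monoLift_comp S.arrow h h0⟩

/-- The canonical morphism `T / im f ⟶ T / S`, where `S` is a subobject of `T` through which
`f : E ⟶ T` factors. -/
noncomputable def quotientMap {E T : 𝒜} (f : E ⟶ T) (S : {S : Subobject T // S.Factors f}) :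
    cokernel f ⟶ cokernel S.1.arrow :=
  cokernel.desc f (cokernel.π S.1.arrow) ((factors_iff_comp_cokernel_π_eq_zero S.1 f).1 S.2)

theorem cokernel_π_comp_quotientMap {E T : 𝒜} (f : E ⟶ T)
    (S : {S : Subobject T // S.Factors f}) :
    cokernel.π f ≫ quotientMap f S = cokernel.π S.1.arrow :=
  cokernel.π_desc _ _ _

/-- The subobject `S / im f` of `coker f` corresponding to a subobject `S` of `T` through which
`f : E ⟶ T` factors, encoded as the kernel of `T / im f ⟶ T / S`. -/
noncomputable def quotientSubobject {E T : 𝒜} (f : E ⟶ T)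
    (S : {S : Subobject T // S.Factors f}) : Subobject (cokernel f) :=
  kernelSubobject (quotientMap f S)

theorem quotientSubobject_factors_iff {E T X : 𝒜} (f : E ⟶ T)
    (S : {S : Subobject T // S.Factors f}) (h : X ⟶ T) :
    (quotientSubobject f S).Factors (h ≫ cokernel.π f) ↔ S.1.Factors h := by
  rw [quotientSubobject, kernelSubobject_factors_iff, Category.assoc, cokernel_π_comp_quotientMap,
    factors_iff_comp_cokernel_π_eq_zero]

theorem quotientSubobject_le_iff {E T : 𝒜} (f : E ⟶ T)
    (S S' : {S : Subobject T // S.Factors f}) :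
    quotientSubobject f S ≤ quotientSubobject f S' ↔ S ≤ S' := by
  refine ⟨fun h => ?_, fun h => ?_⟩
  · apply Subobject.le_of_factors
    rw [← quotientSubobject_factors_iff f S']
    exact Subobject.factors_of_le _ h
      ((quotientSubobject_factors_iff f S _).2 (S.1.factors_self))
  · have hS : S.1.arrow ≫ cokernel.π S'.1.arrow = 0 :=
      (factors_iff_comp_cokernel_π_eq_zero _ _).1 (Subobject.factors_of_le _ h S.1.factors_self)
    have hcomp : quotientMap f S ≫ cokernel.desc _ _ hS = quotientMap f S' := by
      rw [← cancel_epi (cokernel.π f), ← Category.assoc, cokernel_π_comp_quotientMap,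
        cokernel_π_comp_quotientMap, cokernel.π_desc]
    apply le_kernelSubobject
    rw [quotientSubobject, ← hcomp, kernelSubobject_arrow_comp_assoc, zero_comp]

theorem wellFoundedGT_subobject_factors {E T : 𝒜} (f : E ⟶ T)
    [IsNoetherianObject (cokernel f)] : WellFoundedGT {S : Subobject T // S.Factors f} :=
  (OrderEmbedding.ofMapLEIff (quotientSubobject f) (quotientSubobject_le_iff f)).wellFoundedGT

theorem exists_forall_isIso_of_compatible_monos {G : ℕ → 𝒜} (g : ∀ n, G n ⟶ G (n + 1)) {T : 𝒜}
    (φ : ∀ n, G n ⟶ T) [∀ n, Mono (φ n)] (hφ : ∀ n, g n ≫ φ (n + 1) = φ n)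
    [IsNoetherianObject (cokernel (φ 0))] : ∃ N, ∀ n, N ≤ n → IsIso (g n) := by
  have hmono : Monotone fun n => Subobject.mk (φ n) :=
    monotone_nat_of_le_succ fun n => Subobject.mk_le_mk_of_comm (g n) (hφ n)
  have hfac (n : ℕ) : (Subobject.mk (φ n)).Factors (φ 0) :=
    Subobject.factors_of_le _ (hmono n.zero_le) (Subobject.mk_factors_self (φ 0))
  have := wellFoundedGT_subobject_factors (φ 0)
  obtain ⟨N, hN⟩ := WellFoundedGT.monotone_chain_condition
    (⟨fun n => ⟨Subobject.mk (φ n), hfac n⟩, hmono⟩ :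
      ℕ →o {S : Subobject T // S.Factors (φ 0)})
  refine ⟨N, fun n hn => ?_⟩
  have hstable : Subobject.mk (φ n) = Subobject.mk (φ (n + 1)) :=
    congrArg Subtype.val ((hN n hn).symm.trans (hN (n + 1) (hn.trans n.le_succ)))
  by_contra hiso
  exact (Subobject.mk_lt_mk_of_comm (g n) (hφ n) hiso).ne hstable

theorem exists_compatible_monos {C : Type*} [Category C] {G : ℕ → C}
    (g : ∀ n, G n ⟶ G (n + 1)) {T : C}
    (hext : ∀ n (φ : G n ⟶ T), Mono φ → ∃ ψ : G (n + 1) ⟶ T, Mono ψ ∧ g n ≫ ψ = φ)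
    (ι : G 0 ⟶ T) [Mono ι] :
    ∃ φ : ∀ n, G n ⟶ T, φ 0 = ι ∧ (∀ n, Mono (φ n)) ∧ ∀ n, g n ≫ φ (n + 1) = φ n := by
  choose ext hmono hcomp using hext
  let φ (n : ℕ) : {φ : G n ⟶ T // Mono φ} :=
    Nat.rec ⟨ι, inferInstance⟩ (fun n φ => ⟨ext n φ.1 φ.2, hmono n φ.1 φ.2⟩) n
  exact ⟨fun n => (φ n).1, rfl, fun n => (φ n).2, fun n => hcomp n (φ n).1 (φ n).2⟩

theorem mono_kernel_ι_comp_cokernel_π {A B T : 𝒜} (g : A ⟶ B) (ψ : B ⟶ T) [Mono (g ≫ ψ)] :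
    Mono (kernel.ι ψ ≫ cokernel.π g) := by
  have : Mono g := mono_of_mono g ψ
  refine Preadditive.mono_of_cancel_zero _ fun {Z} h hh => ?_
  rw [← Category.assoc] at hh
  have hlift : Abelian.monoLift g (h ≫ kernel.ι ψ) hh ≫ g = h ≫ kernel.ι ψ :=
    Abelian.monoLift_comp g _ hh
  have hzero : Abelian.monoLift g (h ≫ kernel.ι ψ) hh = 0 := by
    apply zero_of_comp_mono (g ≫ ψ)
    rw [reassoc_of% hlift, kernel.condition, comp_zero]
  apply zero_of_comp_mono (kernel.ι ψ)
  rw [← hlift, hzero, zero_comp]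

variable {P : ObjectProperty 𝒜}

theorem mono_of_mono_comp_of_isTorsionFreeFor [P.IsClosedUnderSubobjects] {A B T : 𝒜}
    (g : A ⟶ B) (hq : P (cokernel g)) (hB : IsTorsionFreeFor P B) (ψ : B ⟶ T) [Mono (g ≫ ψ)] :
    Mono ψ := by
  have := mono_kernel_ι_comp_cokernel_π g ψ
  exact Preadditive.mono_of_kernel_zero
    (hB (P.prop_of_mono (kernel.ι ψ ≫ cokernel.π g) hq) (kernel.ι ψ))

/-- `T` is injective relative to `P` if every short exact sequence `0 → T → Y → c → 0` with `c` in
`P` splits; this is `Ext¹(c, T) = 0` for `c` in `P`, encoded by retractions. -/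
def IsInjectiveFor (P : ObjectProperty 𝒜) (T : 𝒜) : Prop :=
  ∀ ⦃Y : 𝒜⦄ (f : T ⟶ Y), Mono f → P (cokernel f) → ∃ r : Y ⟶ T, f ≫ r = 𝟙 T

theorem IsInjectiveFor.exists_comp_eq [P.IsClosedUnderIsomorphisms] {T : 𝒜}
    (hT : IsInjectiveFor P T) {A B : 𝒜} (g : A ⟶ B) [Mono g] (hq : P (cokernel g)) (φ : A ⟶ T) :
    ∃ ψ : B ⟶ T, g ≫ ψ = φ := by
  have sq : IsPushout g φ (pushout.inr φ g) (pushout.inl φ g) := (IsPushout.of_hasPushout φ g).flip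
  have := isIso_cokernel_map_of_isPushout sq
  have hq' : P (cokernel (pushout.inl φ g)) :=
    P.prop_of_iso (asIso (cokernel.map _ _ _ _ sq.w)) hq
  obtain ⟨r, hr⟩ := hT (pushout.inl φ g) inferInstance hq'
  refine ⟨pushout.inr φ g ≫ r, ?_⟩
  rw [← pushout.condition_assoc, hr, Category.comp_id]

theorem chain_stabilizes_general [P.IsClosedUnderSubobjects] {G : ℕ → 𝒜}
    (g : ∀ n, G n ⟶ G (n + 1)) [∀ n, Mono (g n)] (htf : ∀ n, IsTorsionFreeFor P (G (n + 1)))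
    (hq : ∀ n, P (cokernel (g n))) {T : 𝒜} (hT : IsInjectiveFor P T) (ι : G 0 ⟶ T) [Mono ι]
    [IsNoetherianObject (cokernel ι)] : ∃ N, ∀ n, N ≤ n → IsIso (g n) := by
  have hext (n : ℕ) (φ : G n ⟶ T) (hφ : Mono φ) :
      ∃ ψ : G (n + 1) ⟶ T, Mono ψ ∧ g n ≫ ψ = φ := by
    obtain ⟨ψ, rfl⟩ := hT.exists_comp_eq (g n) (hq n) φ
    exact ⟨ψ, mono_of_mono_comp_of_isTorsionFreeFor (g n) (hq n) (htf n) ψ, rfl⟩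
  obtain ⟨φ, rfl, _, hφ⟩ := exists_compatible_monos g hext ι
  exact exists_forall_isIso_of_compatible_monos g φ hφ

end

/-- **Stabilization of chains with quotients in `𝒞`.** Given monomorphisms
`g n : G n ⟶ G (n+1)` between `𝒞`-torsion-free objects with `coker (g n) ∈ 𝒞`, and a
monomorphism `ι : G 0 ⟶ T` with `coker ι ∈ 𝒞`, such that every short exact sequence
`0 → T → Y → c → 0` with `c ∈ 𝒞` splits and `coker ι` is a Noetherian object (every
ascending chain of subobjects stabilizes), the chain stabilizes: `g n` is an isomorphism
for all large `n`. -/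
theorem chain_stabilizes {𝒜 : Type*} [Category 𝒜] [Abelian 𝒜]
    {P : 𝒜 → Prop} (hP : IsSerreClass P) (G : ℕ → 𝒜) (g : ∀ n, G n ⟶ G (n + 1))
    (hg : ∀ n, Mono (g n)) (htf : ∀ n, IsTorsionFreeFor P (G n))
    (hq : ∀ n, P (cokernel (g n))) {T : 𝒜} (ι : G 0 ⟶ T) (hι : Mono ι)
    (hcι : P (cokernel ι))
    (hsplit : ∀ ⦃Y : 𝒜⦄ (f : T ⟶ Y), Mono f → P (cokernel f) →
      ∃ r : Y ⟶ T, f ≫ r = 𝟙 T)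
    (hnoeth : ∀ c : ℕ →o Subobject (cokernel ι), ∃ N, ∀ n, N ≤ n → c n = c N) :
    ∃ N, ∀ n, N ≤ n → IsIso (g n) := by
  have : ObjectProperty.IsClosedUnderSubobjects P := ⟨fun f hf => hP.2.1 f hf⟩
  have : IsNoetherianObject (cokernel ι) :=
    (isNoetherianObject_iff_monotone_chain_condition _).2 fun c =>
      (hnoeth c).imp fun _ hN n hn => (hN n hn).symm
  exact chain_stabilizes_general (P := P) g (fun n => htf (n + 1)) hq hsplit ι
end

section
/- Let a > 0 and α, β be real numbers with α > a²/6 + |β|·a/2. Then there exists a nonempty open interval I ⊆ (a², 6α) such that for every K ∈ I one has K − 6α < 0 and (K − 6α)·(a⁴ − K·a²) − (9/4)·β²·a⁴ > 0; equivalently, for every K ∈ I the symmetric 2×2 real matrix with diagonal entries K − 6α and a⁴ − K·a² and both off-diagonal entries equal to −(3/2)·β·a² is negative definite. -/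
/-!
Up to the factor `a ^ 2`, the determinant is `(6α - K)(K - a ^ 2) - (3/2 · |βa|) ^ 2`, so it is
positive as soon as `K` lies between `a ^ 2` and `6α` at distance more than `3/2 · |βa|` from both.
The hypothesis says exactly that `6α - a ^ 2 > 3 |βa|`, which leaves room for an interval of such
`K`.
-/

theorem sq_lt_sub_mul_sub_of_mem_Ioo {R : Type*} [Ring R] [LinearOrder R] [IsStrictOrderedRing R]
    {p q t x : R} (ht : 0 ≤ t) (hx : x ∈ Set.Ioo (p + t) (q - t)) :
    t ^ 2 < (q - x) * (x - p) := by
  have left_gap : t < x - p := lt_sub_iff_add_lt'.mpr hx.1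
  have right_gap : t < q - x := lt_sub_comm.mp hx.2
  simpa only [sq] using mul_lt_mul'' right_gap left_gap ht ht

section LinearOrderedField

variable {𝕜 : Type*} [Field 𝕜] [LinearOrder 𝕜] [IsStrictOrderedRing 𝕜] {a α β : 𝕜}

/-- The Gram matrix of the quadratic form `K·Δ̄ + ∇` on the kernel of the central charge, in the
basis `(0, 1, 0, α)`, `(1, 0, a²/2, β·a²/2 - b·ξ)`; its entries do not involve `b` and `ξ`. -/
def gramMatrix (a α β K : 𝕜) : Matrix (Fin 2) (Fin 2) 𝕜 :=
  !![K - 6 * α, -(3 / 2) * β * a ^ 2; -(3 / 2) * β * a ^ 2, a ^ 4 - K * a ^ 2]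

theorem det_gramMatrix (a α β K : 𝕜) :
    (gramMatrix a α β K).det =
      (K - 6 * α) * (a ^ 4 - K * a ^ 2) - (9 / 4) * β ^ 2 * a ^ 4 := by
  rw [gramMatrix, Matrix.det_fin_two_of]
  ring

theorem det_gramMatrix_eq_sq_mul_sub_sq (a α β K : 𝕜) :
    (gramMatrix a α β K).det =
      a ^ 2 * ((6 * α - K) * (K - a ^ 2) - (3 / 2 * |β * a|) ^ 2) := by
  rw [det_gramMatrix, mul_pow, sq_abs]
  ring

theorem det_gramMatrix_pos_of_mem_Ioo {K : 𝕜} (ha : a ≠ 0)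
    (hK : K ∈ Set.Ioo (a ^ 2 + 3 / 2 * |β * a|) (6 * α - 3 / 2 * |β * a|)) :
    0 < (gramMatrix a α β K).det := by
  have margin_sq_lt : (3 / 2 * |β * a|) ^ 2 < (6 * α - K) * (K - a ^ 2) :=
    sq_lt_sub_mul_sub_of_mem_Ioo (by positivity) hK
  rw [det_gramMatrix_eq_sq_mul_sub_sq]
  exact mul_pos (sq_pos_of_ne_zero ha) (sub_pos.mpr margin_sq_lt)

theorem exists_interval_matrix_negdef_general (ha : a ≠ 0)
    (hα : a ^ 2 / 6 + |β * a| / 2 < α) :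
    ∃ K₁ K₂ : 𝕜, K₁ < K₂ ∧ a ^ 2 ≤ K₁ ∧ K₂ ≤ 6 * α ∧
      ∀ K ∈ Set.Ioo K₁ K₂,
        K - 6 * α < 0 ∧
        0 < (K - 6 * α) * (a ^ 4 - K * a ^ 2) - (9 / 4) * β ^ 2 * a ^ 4 := by
  have margin_nonneg : 0 ≤ 3 / 2 * |β * a| := by positivity
  have upper_le : 6 * α - 3 / 2 * |β * a| ≤ 6 * α := sub_le_self _ margin_nonneg
  refine ⟨a ^ 2 + 3 / 2 * |β * a|, 6 * α - 3 / 2 * |β * a|, by linarith,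
    le_add_of_nonneg_right margin_nonneg, upper_le, fun K hK ↦ ⟨?_, ?_⟩⟩
  · exact sub_neg.mpr (hK.2.trans_le upper_le)
  · exact det_gramMatrix a α β K ▸ det_gramMatrix_pos_of_mem_Ioo ha hK

end LinearOrderedField

/-- **Computational core of the support-property lemma.** If `a > 0` and
`α > a²/6 + |β|·a/2`, then there is a nonempty open interval `I ⊆ (a², 6α)` such that for
every `K ∈ I` one has `K − 6α < 0` and `(K − 6α)·(a⁴ − K·a²) − (9/4)·β²·a⁴ > 0`; i.e. the
symmetric `2×2` matrix with diagonal `K − 6α`, `a⁴ − K·a²` and off-diagonal `−(3/2)·β·a²`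
is negative definite. -/
theorem exists_interval_matrix_negdef (a α β : ℝ) (ha : 0 < a)
    (hα : α > a ^ 2 / 6 + |β| * a / 2) :
    ∃ K₁ K₂ : ℝ, K₁ < K₂ ∧ a ^ 2 ≤ K₁ ∧ K₂ ≤ 6 * α ∧
      ∀ K ∈ Set.Ioo K₁ K₂,
        K - 6 * α < 0 ∧
        (K - 6 * α) * (a ^ 4 - K * a ^ 2) - (9 / 4) * β ^ 2 * a ^ 4 > 0 := by
  refine exists_interval_matrix_negdef_general ha.ne' ?_
  rwa [abs_mul, abs_of_pos ha]
end

section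
/- With the notation of the context, let s, q ∈ ℝ and suppose v₂ = s·v₁ + q·v₀. Then for all b₁, b₂ ∈ ℝ one has Q(b₁, s·b₁ + q; ξ, g)(v)·(v₁ − b₂·v₀) = Q(b₂, s·b₂ + q; ξ, g)(v)·(v₁ − b₁·v₀). In particular, along the line {(b, w) : w = s·b + q}, the quantity Q(b, s·b + q; ξ, g)(v)/(v₁ − b·v₀) is independent of b wherever v₁ − b·v₀ ≠ 0. -/
/-- Twisted first component `v₁ᵇ = v₁ − b·v₀`. -/
noncomputable def vb1 (b v₀ v₁ : ℝ) : ℝ := v₁ - b * v₀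

/-- Twisted second component `v₂ᵇ = v₂ − b·v₁ + (b²/2)·v₀`. -/
noncomputable def vb2 (b v₀ v₁ v₂ : ℝ) : ℝ := v₂ - b * v₁ + (b ^ 2 / 2) * v₀

/-- Twisted third component `v₃ᵇ = v₃ − b·v₂ + (b²/2)·v₁ − (b³/6)·v₀`. -/
noncomputable def vb3 (b v₀ v₁ v₂ v₃ : ℝ) : ℝ :=
  v₃ - b * v₂ + (b ^ 2 / 2) * v₁ - (b ^ 3 / 6) * v₀

/-- The quadratic quantity `Q^Γ_{b,w}(v)` of the generalized Bogomolov–Gieseker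
inequality, with `ξ = Γ.H/H³` and `g = Γ.ch₁`. -/
noncomputable def Qbw (b w ξ g v₀ v₁ v₂ v₃ : ℝ) : ℝ :=
  (2 * w - b ^ 2) * (v₁ ^ 2 - 2 * v₀ * v₂ + 3 * ξ * v₀ ^ 2) +
    2 * vb2 b v₀ v₁ v₂ * (2 * vb2 b v₀ v₁ v₂ - 3 * ξ * v₀) -
    6 * vb1 b v₀ v₁ * (vb3 b v₀ v₁ v₂ v₃ - g + b * ξ * v₀)

/-!
After the higher powers of `b` cancel, `Q` is a linear combination, with coefficients independent
of `(b, w)`, of the three `2 × 2` minors of the matrix with rows `(v₀, v₁, v₂)` and `(1, b, w)`.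
Both rows `(x, y, z)` satisfy the equation `z = s·y + q·x` of the wall, so each minor is, up to
sign, `v₁ᵇ` times one of `s`, `q`, `1`. Hence `Q = v₁ᵇ · c` with `c` constant along the wall.
-/

section

variable (b w ξ g v₀ v₁ v₂ v₃ : ℝ)

theorem Qbw_zero_zero_eq_minors :
    Qbw b w 0 0 v₀ v₁ v₂ v₃ =
      4 * v₂ * (v₂ - w * v₀) + 2 * v₁ * (w * v₁ - b * v₂) - 6 * v₃ * vb1 b v₀ v₁ := by
  simp only [Qbw, vb1, vb2, vb3]
  ring

theorem Qbw_eq_Qbw_zero_zero_add :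
    Qbw b w ξ g v₀ v₁ v₂ v₃ =
      Qbw b w 0 0 v₀ v₁ v₂ v₃ + (6 * g * vb1 b v₀ v₁ - 6 * ξ * v₀ * (v₂ - w * v₀)) := by
  simp only [Qbw, vb1, vb2]
  ring

theorem Qbw_eq_minors :
    Qbw b w ξ g v₀ v₁ v₂ v₃ =
      (4 * v₂ - 6 * ξ * v₀) * (v₂ - w * v₀) + 2 * v₁ * (w * v₁ - b * v₂) -
        6 * (v₃ - g) * vb1 b v₀ v₁ := by
  rw [Qbw_eq_Qbw_zero_zero_add, Qbw_zero_zero_eq_minors]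
  ring

end

/-- The value of `Q^Γ_{b,w}(v) / v₁ᵇ` along the wall `w = s·b + q`, written without division so
that it also makes sense where `v₁ᵇ = 0`. -/
noncomputable def wallQuotient (ξ g v₀ v₁ v₂ v₃ s q : ℝ) : ℝ :=
  (4 * v₂ - 6 * ξ * v₀) * s + 2 * v₁ * q - 6 * (v₃ - g)

theorem Qbw_eq_vb1_mul_wallQuotient (b ξ g v₀ v₁ v₂ v₃ s q : ℝ) (h : v₂ = s * v₁ + q * v₀) :
    Qbw b (s * b + q) ξ g v₀ v₁ v₂ v₃ =
      vb1 b v₀ v₁ * wallQuotient ξ g v₀ v₁ v₂ v₃ s q := by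
  have minor_zero_two : v₂ - (s * b + q) * v₀ = s * vb1 b v₀ v₁ := by
    rw [h, vb1]
    ring
  have minor_one_two : (s * b + q) * v₁ - b * v₂ = q * vb1 b v₀ v₁ := by
    rw [h, vb1]
    ring
  rw [Qbw_eq_minors, minor_zero_two, minor_one_two, wallQuotient]
  ring

/-- **`Q` along a numerical wall.** If `v₂ = s·v₁ + q·v₀`, then along the line `w = s·b + q`
one has `Q(b₁)(v₁ − b₂·v₀) = Q(b₂)(v₁ − b₁·v₀)` for all `b₁, b₂`; in particular,
`Q(b, s·b + q; ξ, g)(v)/(v₁ − b·v₀)` is independent of `b` wherever `v₁ − b·v₀ ≠ 0`. -/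
theorem Qbw_on_wall (ξ g v₀ v₁ v₂ v₃ s q : ℝ) (h : v₂ = s * v₁ + q * v₀) :
    (∀ b₁ b₂ : ℝ,
        Qbw b₁ (s * b₁ + q) ξ g v₀ v₁ v₂ v₃ * (v₁ - b₂ * v₀) =
          Qbw b₂ (s * b₂ + q) ξ g v₀ v₁ v₂ v₃ * (v₁ - b₁ * v₀)) ∧
      ∀ b₁ b₂ : ℝ, v₁ - b₁ * v₀ ≠ 0 → v₁ - b₂ * v₀ ≠ 0 →
        Qbw b₁ (s * b₁ + q) ξ g v₀ v₁ v₂ v₃ / (v₁ - b₁ * v₀) =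
          Qbw b₂ (s * b₂ + q) ξ g v₀ v₁ v₂ v₃ / (v₁ - b₂ * v₀) := by
  have factorization (b : ℝ) : Qbw b (s * b + q) ξ g v₀ v₁ v₂ v₃ =
      (v₁ - b * v₀) * wallQuotient ξ g v₀ v₁ v₂ v₃ s q :=
    Qbw_eq_vb1_mul_wallQuotient b ξ g v₀ v₁ v₂ v₃ s q h
  refine ⟨fun b₁ b₂ ↦ ?_, fun b₁ b₂ h₁ h₂ ↦ ?_⟩
  · rw [factorization b₁, factorization b₂]
    ring
  · rw [factorization b₁, factorization b₂, mul_div_cancel_left₀ _ h₁, mul_div_cancel_left₀ _ h₂]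
end

section
/- Let v₀, v₁, v₂, v₃, g be real numbers and ξ ≥ 0 a real number, with v₀ ≠ 0 and D := v₁² − 2·v₀·v₂ ≥ 0. For a > 0 define b(a) := (v₁ − √(D + a²·v₀²))/v₀ and f(a) := v₃ − b(a)·v₂ + (b(a)²/2)·v₁ − (b(a)³/6)·v₀ − (a²/6)·(v₁ − b(a)·v₀) − g + b(a)·ξ·v₀. Then f is non-increasing on (0, +∞): for all real numbers 0 < a₁ ≤ a₂ one has f(a₁) ≥ f(a₂). -/
/-- The branch `b(a) = (v₁ − √(D + a²·v₀²))/v₀` of the curve `ν_{b,w}(v) = b`,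
where `D = v₁² − 2·v₀·v₂`. -/
noncomputable def bBranch (v₀ v₁ v₂ : ℝ) (a : ℝ) : ℝ :=
  (v₁ - Real.sqrt ((v₁ ^ 2 - 2 * v₀ * v₂) + a ^ 2 * v₀ ^ 2)) / v₀

/-- The function
`f(a) = v₃ − b(a)·v₂ + (b(a)²/2)·v₁ − (b(a)³/6)·v₀ − (a²/6)·(v₁ − b(a)·v₀) − g + b(a)·ξ·v₀`. -/
noncomputable def fBranch (v₀ v₁ v₂ v₃ g ξ : ℝ) (a : ℝ) : ℝ :=
  v₃ - bBranch v₀ v₁ v₂ a * v₂ + (bBranch v₀ v₁ v₂ a ^ 2 / 2) * v₁ -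
    (bBranch v₀ v₁ v₂ a ^ 3 / 6) * v₀ -
    (a ^ 2 / 6) * (v₁ - bBranch v₀ v₁ v₂ a * v₀) - g + bBranch v₀ v₁ v₂ a * ξ * v₀

/-!
Twisting `v` by `e^{-b}` preserves the discriminant `D = v₁² − 2v₀v₂` and the cubic
`C = v₀²v₃ − v₀v₁v₂ + v₁³/3`. Along the branch `v₂ᵇ = (a²/2)v₀`, so these two invariants express
`v₀²(v₃ᵇ − (a²/6)v₁ᵇ)` as `C − (D/3)v₁ᵇ`: the function `f` is affine in `v₁ᵇ = √(D + a²v₀²)`,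
with slope `−(D/(3v₀²) + ξ)`.
-/

/-- A numerical Chern character `(v₀, v₁, v₂, v₃)` of a threefold, its components being the
intersection numbers `H³⁻ⁱ · chᵢ`. -/
structure ChernVector (K : Type*) where
  (v₀ v₁ v₂ v₃ : K)

namespace ChernVector

section Field

variable {K : Type*} [Field K]

/-- The twisted character `vᵇ = e^{-b} · v`, where `b` stands for `b` times the polarization. -/
def twist (v : ChernVector K) (b : K) : ChernVector K where
  v₀ := v.v₀
  v₁ := v.v₁ - b * v.v₀
  v₂ := v.v₂ - b * v.v₁ + b ^ 2 / 2 * v.v₀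
  v₃ := v.v₃ - b * v.v₂ + b ^ 2 / 2 * v.v₁ - b ^ 3 / 6 * v.v₀

/-- The discriminant of the Bogomolov inequality. -/
def discr (v : ChernVector K) : K :=
  v.v₁ ^ 2 - 2 * v.v₀ * v.v₂

/-- The twist-invariant cubic in the Chern character: it is `v₀²` times the value of `v₃` after the
twist that annihilates `v₁`. -/
def cubicInvariant (v : ChernVector K) : K :=
  v.v₀ ^ 2 * v.v₃ - v.v₀ * v.v₁ * v.v₂ + v.v₁ ^ 3 / 3

variable [CharZero K]

theorem discr_twist (v : ChernVector K) (b : K) : (v.twist b).discr = v.discr := by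
  simp only [discr, twist]
  ring

theorem cubicInvariant_twist (v : ChernVector K) (b : K) :
    (v.twist b).cubicInvariant = v.cubicInvariant := by
  simp only [cubicInvariant, twist]
  ring

theorem sq_mul_sub_eq_cubicInvariant_sub (v : ChernVector K) {a : K}
    (hv₂ : v.v₂ = a ^ 2 / 2 * v.v₀) :
    v.v₀ ^ 2 * (v.v₃ - a ^ 2 / 6 * v.v₁) = v.cubicInvariant - v.discr / 3 * v.v₁ := by
  simp only [cubicInvariant, discr, hv₂]
  ring

end Field

section Branch

variable (v : ChernVector ℝ) {a : ℝ}

theorem twist_bBranch_v₁ (hv₀ : v.v₀ ≠ 0) :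
    (v.twist (bBranch v.v₀ v.v₁ v.v₂ a)).v₁ = √(v.discr + a ^ 2 * v.v₀ ^ 2) := by
  simp only [twist, bBranch, discr, div_mul_cancel₀ _ hv₀, sub_sub_cancel]

theorem twist_bBranch_v₂ (hv₀ : v.v₀ ≠ 0) (ha : 0 ≤ v.discr + a ^ 2 * v.v₀ ^ 2) :
    (v.twist (bBranch v.v₀ v.v₁ v.v₂ a)).v₂ = a ^ 2 / 2 * v.v₀ := by
  set w := v.twist (bBranch v.v₀ v.v₁ v.v₂ a)
  have hdiscr : w.v₁ ^ 2 - 2 * v.v₀ * w.v₂ = v.discr := v.discr_twist _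
  have hsq : w.v₁ ^ 2 = v.discr + a ^ 2 * v.v₀ ^ 2 := by
    rw [v.twist_bBranch_v₁ hv₀, Real.sq_sqrt ha]
  apply mul_left_cancel₀ hv₀
  linarith

theorem sq_mul_fBranch (g ξ : ℝ) (hv₀ : v.v₀ ≠ 0) (ha : 0 ≤ v.discr + a ^ 2 * v.v₀ ^ 2) :
    v.v₀ ^ 2 * fBranch v.v₀ v.v₁ v.v₂ v.v₃ g ξ a =
      v.cubicInvariant + v.v₀ ^ 2 * (ξ * v.v₁ - g) -
        (v.discr / 3 + ξ * v.v₀ ^ 2) * √(v.discr + a ^ 2 * v.v₀ ^ 2) := by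
  set b := bBranch v.v₀ v.v₁ v.v₂ a with hb
  have hf : fBranch v.v₀ v.v₁ v.v₂ v.v₃ g ξ a =
      (v.twist b).v₃ - a ^ 2 / 6 * (v.twist b).v₁ - g + b * ξ * v.v₀ := rfl
  have hbv₀ : b * v.v₀ = v.v₁ - (v.twist b).v₁ := (sub_sub_cancel _ _).symm
  have hcubic : v.v₀ ^ 2 * ((v.twist b).v₃ - a ^ 2 / 6 * (v.twist b).v₁) =
      v.cubicInvariant - v.discr / 3 * (v.twist b).v₁ := by
    rw [← v.cubicInvariant_twist b, ← v.discr_twist b]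
    exact (v.twist b).sq_mul_sub_eq_cubicInvariant_sub (v.twist_bBranch_v₂ hv₀ ha)
  rw [hf, ← v.twist_bBranch_v₁ hv₀, ← hb]
  linear_combination hcubic + v.v₀ ^ 2 * ξ * hbv₀

end Branch

end ChernVector

theorem fBranch_antitone_general {v₀ v₁ v₂ ξ a₁ a₂ : ℝ} (v₃ g : ℝ) (hv₀ : v₀ ≠ 0)
    (hξ : 0 ≤ (v₁ ^ 2 - 2 * v₀ * v₂) / 3 + ξ * v₀ ^ 2)
    (ha₁ : 0 ≤ v₁ ^ 2 - 2 * v₀ * v₂ + a₁ ^ 2 * v₀ ^ 2) (ha : |a₁| ≤ |a₂|) :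
    fBranch v₀ v₁ v₂ v₃ g ξ a₂ ≤ fBranch v₀ v₁ v₂ v₃ g ξ a₁ := by
  let v : ChernVector ℝ := ⟨v₀, v₁, v₂, v₃⟩
  have hradicand : v.discr + a₁ ^ 2 * v₀ ^ 2 ≤ v.discr + a₂ ^ 2 * v₀ ^ 2 := by
    gcongr v.discr + ?_ * v₀ ^ 2
    exact sq_le_sq.mpr ha
  apply le_of_mul_le_mul_left _ (sq_pos_of_ne_zero hv₀)
  calc v₀ ^ 2 * fBranch v₀ v₁ v₂ v₃ g ξ a₂
      = v.cubicInvariant + v₀ ^ 2 * (ξ * v₁ - g) -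
          (v.discr / 3 + ξ * v₀ ^ 2) * √(v.discr + a₂ ^ 2 * v₀ ^ 2) :=
        v.sq_mul_fBranch g ξ hv₀ (ha₁.trans hradicand)
    _ ≤ v.cubicInvariant + v₀ ^ 2 * (ξ * v₁ - g) -
          (v.discr / 3 + ξ * v₀ ^ 2) * √(v.discr + a₁ ^ 2 * v₀ ^ 2) :=
        sub_le_sub_left (mul_le_mul_of_nonneg_left (Real.sqrt_le_sqrt hradicand) hξ) _
    _ = v₀ ^ 2 * fBranch v₀ v₁ v₂ v₃ g ξ a₁ := (v.sq_mul_fBranch g ξ hv₀ ha₁).symm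

/-- **Monotonicity along the branch.** If `ξ ≥ 0`, `v₀ ≠ 0` and `D = v₁² − 2·v₀·v₂ ≥ 0`,
then `f` is non-increasing on `(0, +∞)`: for `0 < a₁ ≤ a₂` one has `f(a₁) ≥ f(a₂)`. -/
theorem fBranch_antitone (v₀ v₁ v₂ v₃ g ξ : ℝ) (hξ : 0 ≤ ξ) (hv₀ : v₀ ≠ 0)
    (hD : 0 ≤ v₁ ^ 2 - 2 * v₀ * v₂) :
    ∀ a₁ a₂ : ℝ, 0 < a₁ → a₁ ≤ a₂ →
      fBranch v₀ v₁ v₂ v₃ g ξ a₂ ≤ fBranch v₀ v₁ v₂ v₃ g ξ a₁ := fun _ _ ha₁ ha ↦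
  fBranch_antitone_general v₃ g hv₀ (by positivity) (by positivity)
    (abs_le_abs_of_nonneg ha₁.le ha)
end

section
/- Let Φ : ℝ → ℝ ∪ {−∞, +∞} be an upper semicontinuous function and let b, w be real numbers with Φ(b) < w. Define R := {(b, w + t) : t ∈ ℝ, t ≥ 0} ⊆ ℝ² and S := {(x, y) ∈ ℝ² : y ≤ Φ(x)} (the inequality taken in ℝ ∪ {−∞, +∞}). Then the Euclidean distance between R and S is positive: there exists δ > 0 such that dist(p, q) ≥ δ for every p ∈ R and every q ∈ S. -/
/-- The Euclidean distance on `ℝ²`. -/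
noncomputable def euclDist (p q : ℝ × ℝ) : ℝ :=
  Real.sqrt ((p.1 - q.1) ^ 2 + (p.2 - q.2) ^ 2)

/-!
Upper semicontinuity at `b` puts the hypograph strictly below some height `r < w` over an
`ε`-ball around `b`. Hence each of its points is either at horizontal distance at least `ε` from the
ray, or at least `w - r` lower than every point of it. This bounds the sup distance `dist` on
`X × ℝ` from below, and on `ℝ × ℝ` the sup distance is at most the Euclidean one.
-/

theorem dist_le_euclDist (p q : ℝ × ℝ) : dist p q ≤ euclDist p q :=
  max_le (Real.abs_le_sqrt (le_add_of_nonneg_right (sq_nonneg _)))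
    (Real.abs_le_sqrt (le_add_of_nonneg_left (sq_nonneg _)))

section PseudoMetricSpace

variable {X : Type*} [PseudoMetricSpace X] {Φ : X → EReal} {b : X} {w : ℝ}

theorem exists_lt_forall_dist_lt_hypograph_lt (hΦ : UpperSemicontinuousAt Φ b)
    (h : Φ b < (w : EReal)) :
    ∃ r < w, ∃ ε > 0, ∀ q : X × ℝ, dist q.1 b < ε → (q.2 : EReal) ≤ Φ q.1 → q.2 < r := by
  obtain ⟨r, hbr, hrw⟩ := EReal.lt_iff_exists_real_btwn.1 h
  obtain ⟨ε, hε, hball⟩ := Metric.eventually_nhds_iff.1 (hΦ r hbr)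
  exact ⟨r, EReal.coe_lt_coe_iff.1 hrw, ε, hε,
    fun q hqb hq => EReal.coe_lt_coe_iff.1 (hq.trans_lt (hball hqb))⟩

theorem ray_dist_hypograph_pos_general (hΦ : UpperSemicontinuousAt Φ b)
    (h : Φ b < (w : EReal)) :
    ∃ δ : ℝ, 0 < δ ∧
      ∀ p : X × ℝ, p.1 = b ∧ w ≤ p.2 →
        ∀ q : X × ℝ, (q.2 : EReal) ≤ Φ q.1 →
          δ ≤ dist p q := by
  obtain ⟨r, hrw, ε, hε, hbelow⟩ := exists_lt_forall_dist_lt_hypograph_lt hΦ h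
  refine ⟨min ε (w - r), lt_min hε (sub_pos.2 hrw), ?_⟩
  rintro ⟨b, y⟩ ⟨rfl, hwy⟩ q hq
  rcases lt_or_ge (dist q.1 b) ε with hnear | hfar
  · calc
      min ε (w - r) ≤ w - r := min_le_right _ _
      _ ≤ y - q.2 := sub_le_sub hwy (hbelow q hnear hq).le
      _ ≤ dist y q.2 := le_abs_self _
      _ ≤ dist (b, y) q := le_max_right _ _
  · calc
      min ε (w - r) ≤ ε := min_le_left _ _
      _ ≤ dist b q.1 := by rwa [dist_comm]
      _ ≤ dist (b, y) q := le_max_left _ _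

end PseudoMetricSpace

/-- **Positive distance between a vertical ray and the hypograph of an upper semicontinuous
function.** If `Φ : ℝ → ℝ ∪ {±∞}` is upper semicontinuous and `Φ(b) < w`, then the ray
`R = {(b, w + t) : t ≥ 0}` and the hypograph `S = {(x, y) : y ≤ Φ(x)}` are at positive
Euclidean distance. -/
theorem ray_dist_hypograph_pos (Φ : ℝ → EReal) (hΦ : UpperSemicontinuous Φ)
    (b w : ℝ) (h : Φ b < (w : EReal)) :
    ∃ δ : ℝ, 0 < δ ∧
      ∀ p : ℝ × ℝ, p.1 = b ∧ w ≤ p.2 →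
        ∀ q : ℝ × ℝ, (q.2 : EReal) ≤ Φ q.1 →
          δ ≤ euclDist p q := by
  obtain ⟨δ, hδ, hdist⟩ := ray_dist_hypograph_pos_general (hΦ b) h
  exact ⟨δ, hδ, fun p hp q hq => (hdist p hp q hq).trans (dist_le_euclDist p q)⟩
end
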